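/- arXiv:0809.4629 — 4 statements merged into one kernel-verified Lean document; each statement's English description precedes it below -/
import Mathlib

section
/- Let 𝔤 be a Lie algebra over ℚ and let ψ : 𝔤 → 𝔤 be a Lie algebra homomorphism such that δ := ψ − id is nilpotent as a linear endomorphism of 𝔤 (i.e. δ^m = 0 for some m ≥ 1). Then log ψ := Σ_{n≥1} ((−1)^{n+1}/n)·δ^n (a finite sum) is a derivation of 𝔤, i.e. (log ψ)(⁅x,y⁆) = ⁅(log ψ)(x), y⁆ + ⁅x, (log ψ)(y)⁆ for all x, y ∈ 𝔤. -/
/-!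
The idea is to interpolate the powers of `ψ = 1 + δ`. As `δ` is nilpotent,
`ψ ^ k = ∑ n, (k choose n) • δ ^ n` is polynomial in `k`, and `log ψ` is the derivative of this
polynomial at `k = 0`, because the binomial polynomial `X choose (n + 1)` has derivative
`(-1) ^ n / (n + 1)` there (`derivative_binomPoly_succ_eval_zero`). The relation
`ψ ^ k ⁅x, y⁆ = ⁅ψ ^ k x, ψ ^ k y⁆` is thus an equality of two polynomials in `k` at all natural
numbers, hence an equality of polynomials, and differentiating it at `k = 0` gives the Leibniz
rule for `log ψ`. To work with honest polynomials over `ℚ`, both sides are first composed with an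
arbitrary linear functional `𝔤 → ℚ`; such functionals separate points.
-/

open Polynomial in
/-- The binomial polynomial `X choose n = X (X - 1) ⋯ (X - n + 1) / n!`. -/
noncomputable def binomPoly (n : ℕ) : ℚ[X] :=
  C ((n.factorial : ℚ)⁻¹) * descPochhammer ℚ n

theorem binomPoly_eval_natCast (n k : ℕ) : (binomPoly n).eval (k : ℚ) = (k.choose n : ℚ) := by
  have h : (n.factorial : ℚ) ≠ 0 := by exact_mod_cast n.factorial_ne_zero
  rw [binomPoly, Polynomial.eval_mul, Polynomial.eval_C, descPochhammer_eval_eq_descFactorial,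
    Nat.descFactorial_eq_factorial_mul_choose]
  push_cast
  field_simp

theorem binomPoly_zero : binomPoly 0 = 1 := by
  simp [binomPoly]

theorem binomPoly_succ_eval_zero (n : ℕ) : (binomPoly (n + 1)).eval 0 = 0 := by
  simpa using binomPoly_eval_natCast (n + 1) 0

theorem descPochhammer_eval_neg_one (n : ℕ) :
    (descPochhammer ℚ n).eval (-1) = (-1) ^ n * (n.factorial : ℚ) := by
  induction n with
  | zero => simp
  | succ n ih =>
    rw [descPochhammer_succ_right, Polynomial.eval_mul, ih, Nat.factorial_succ]
    simp only [Polynomial.eval_sub, Polynomial.eval_X, Polynomial.eval_natCast]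
    push_cast
    ring

/-- The derivatives at `0` of the binomial polynomials are the coefficients of the logarithm. -/
theorem derivative_binomPoly_succ_eval_zero (n : ℕ) :
    (binomPoly (n + 1)).derivative.eval 0 = (-1 : ℚ) ^ n / (n + 1) := by
  have h : (n.factorial : ℚ) ≠ 0 := by exact_mod_cast n.factorial_ne_zero
  have h' : (n + 1 : ℚ) ≠ 0 := by positivity
  rw [binomPoly, descPochhammer_succ_left]
  simp only [Polynomial.derivative_mul, Polynomial.derivative_C, Polynomial.derivative_X,
    Polynomial.eval_add, Polynomial.eval_mul, Polynomial.eval_C, Polynomial.eval_X,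
    Polynomial.eval_comp, Polynomial.eval_sub, Polynomial.eval_one, zero_mul, zero_add, one_mul,
    add_zero, zero_sub, descPochhammer_eval_neg_one, Nat.factorial_succ]
  push_cast
  field_simp

/-- The binomial expansion of `(1 + d) ^ k`, with a range of summation independent of `k`. -/
theorem one_add_pow_eq_sum_of_pow_eq_zero {A : Type*} [Ring A] [Algebra ℚ A] (d : A) {N : ℕ}
    (hd : d ^ N = 0) (k : ℕ) :
    (1 + d) ^ k = ∑ n ∈ Finset.range N, (k.choose n : ℚ) • d ^ n := by
  have h1 : (1 + d) ^ k = ∑ n ∈ Finset.range (k + 1), (k.choose n : ℚ) • d ^ n := by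
    rw [add_comm, (Commute.one_right d).add_pow]
    refine Finset.sum_congr rfl fun n _ => ?_
    rw [one_pow, mul_one, Nat.cast_smul_eq_nsmul, nsmul_eq_mul, (Nat.cast_commute _ _).eq]
  -- Both sums extend to a common range: `k.choose n` vanishes for `n > k`, `d ^ n` for `n ≥ N`.
  rw [h1, Finset.sum_subset (Finset.range_subset_range.2 (le_max_left (k + 1) N)),
    ← Finset.sum_subset (Finset.range_subset_range.2 (le_max_right (k + 1) N))]
  · intro n _ hn
    rw [pow_eq_zero_of_le (by simpa using hn) hd, smul_zero]
  · intro n _ hn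
    rw [Nat.choose_eq_zero_of_lt (by simpa using hn), Nat.cast_zero, zero_smul]

theorem lieHom_pow_apply_lie {𝔤 : Type*} [LieRing 𝔤] [LieAlgebra ℚ 𝔤] (ψ : 𝔤 →ₗ⁅ℚ⁆ 𝔤) (k : ℕ)
    (x y : 𝔤) :
    ((ψ.toLinearMap : Module.End ℚ 𝔤) ^ k) ⁅x, y⁆ =
      ⁅((ψ.toLinearMap : Module.End ℚ 𝔤) ^ k) x, ((ψ.toLinearMap : Module.End ℚ 𝔤) ^ k) y⁆ := by
  induction k with
  | zero => simp
  | succ k ih => simp [pow_succ', ih]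

theorem log_of_unipotent_lieHom_is_derivation
    (𝔤 : Type*) [LieRing 𝔤] [LieAlgebra ℚ 𝔤]
    (ψ : 𝔤 →ₗ⁅ℚ⁆ 𝔤) (m : ℕ) (hm : 1 ≤ m)
    (hnil : ((ψ.toLinearMap - LinearMap.id : Module.End ℚ 𝔤)) ^ m = 0) :
    ∀ x y : 𝔤,
      (∑ n ∈ Finset.range m, (((-1 : ℚ) ^ n) / (n + 1)) •
          ((ψ.toLinearMap - LinearMap.id : Module.End ℚ 𝔤)) ^ (n + 1)) ⁅x, y⁆ =
      ⁅(∑ n ∈ Finset.range m, (((-1 : ℚ) ^ n) / (n + 1)) •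
          ((ψ.toLinearMap - LinearMap.id : Module.End ℚ 𝔤)) ^ (n + 1)) x, y⁆ +
      ⁅x, (∑ n ∈ Finset.range m, (((-1 : ℚ) ^ n) / (n + 1)) •
          ((ψ.toLinearMap - LinearMap.id : Module.End ℚ 𝔤)) ^ (n + 1)) y⁆ := by
  intro x y
  set δ : Module.End ℚ 𝔤 := ψ.toLinearMap - LinearMap.id with hδ
  -- The range `m + 1` makes the summands of `log ψ` correspond to the indices other than `0`.
  have hpow (k : ℕ) (z : 𝔤) : ((ψ.toLinearMap : Module.End ℚ 𝔤) ^ k) z =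
      ∑ n ∈ Finset.range (m + 1), (k.choose n : ℚ) • (δ ^ n) z := by
    have h1 : (ψ.toLinearMap : Module.End ℚ 𝔤) = 1 + δ := by
      rw [hδ]; exact (add_sub_cancel (1 : Module.End ℚ 𝔤) _).symm
    rw [h1, one_add_pow_eq_sum_of_pow_eq_zero δ (pow_eq_zero_of_le (Nat.le_succ m) hnil) k]
    simp
  rw [← sub_eq_zero, ← Module.forall_dual_apply_eq_zero_iff ℚ]
  intro l
  rw [map_sub, sub_eq_zero]
  have key : ∑ n ∈ Finset.range (m + 1), binomPoly n * Polynomial.C (l ((δ ^ n) ⁅x, y⁆)) =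
      ∑ i ∈ Finset.range (m + 1), ∑ j ∈ Finset.range (m + 1),
        binomPoly i * binomPoly j * Polynomial.C (l ⁅(δ ^ i) x, (δ ^ j) y⁆) := by
    refine Polynomial.eq_of_infinite_eval_eq _ _
      ((Set.infinite_range_of_injective (Nat.cast_injective (R := ℚ))).mono ?_)
    rintro _ ⟨k, rfl⟩
    have h := congrArg l (lieHom_pow_apply_lie ψ k x y)
    simp only [hpow, sum_lie, lie_sum, smul_lie, lie_smul,
      map_sum, map_smul, smul_eq_mul] at h
    simp only [Set.mem_ofPred_eq, Polynomial.eval_finsetSum, Polynomial.eval_mul,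
      Polynomial.eval_C, binomPoly_eval_natCast, h, mul_assoc, Finset.mul_sum]
    rw [Finset.sum_comm]
    exact Finset.sum_congr rfl fun i _ => Finset.sum_congr rfl fun j _ => mul_left_comm _ _ _
  have hder := congrArg (fun p => p.derivative.eval 0) key
  simp only [Finset.sum_range_succ', binomPoly_zero, Polynomial.derivative_sum,
    Polynomial.derivative_add, Polynomial.derivative_mul, Polynomial.derivative_C,
    Polynomial.eval_finsetSum, Polynomial.eval_add,
    Polynomial.eval_mul, Polynomial.eval_C,
    binomPoly_succ_eval_zero, derivative_binomPoly_succ_eval_zero, mul_zero, zero_mul, add_zero,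
    zero_add, mul_one, one_mul, pow_zero, Module.End.one_apply, Finset.sum_const_zero] at hder
  simp only [LinearMap.sum_apply, LinearMap.smul_apply, sum_lie, lie_sum, smul_lie, lie_smul,
    map_add, map_sum, map_smul, smul_eq_mul]
  exact hder
end

section
/- Let R be a commutative ring, 𝔤 a Lie algebra over R, ψ : 𝔤 → 𝔤 a Lie algebra homomorphism, and δ := ψ − id, an R-linear endomorphism of 𝔤. For n ≥ 0 and 0 ≤ i, j ≤ n, let a^n_{i,j} ∈ ℕ be the coefficient of X^i Y^j in the polynomial (X + Y + XY)^n ∈ ℕ[X,Y]. Then for every n ≥ 0 and all x, y ∈ 𝔤 one has δ^n(⁅x, y⁆) = Σ_{0 ≤ i, j ≤ n} a^n_{i,j} · ⁅δ^i(x), δ^j(y)⁆, where δ^0 = id and δ^n is the n-th iterate of δ. -/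
/-!
Since `ψ = 1 + δ` preserves brackets, `δ ⁅u, v⁆ = ⁅δ u, v⁆ + ⁅u, δ v⁆ + ⁅δ u, δ v⁆`.
Fix `x, y` and let `Φ : ℕ[X, Y] → 𝔤` be the additive map `X ^ i * Y ^ j ↦ ⁅δ ^ i x, δ ^ j y⁆`
(`bracketEval`). The displayed rule says exactly that `Φ` turns multiplication by
`X + Y + X * Y` into `δ` (`bracketEval_mul`), whence
`Φ ((X + Y + X * Y) ^ n) = δ ^ n (Φ 1) = δ ^ n ⁅x, y⁆`. As `(X + Y + X * Y) ^ n` has degree at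
most `n` in each variable, expanding it in monomials gives the asserted double sum.
-/

/-!
Statement 3. For a Lie algebra 𝔤 over a commutative ring R, a Lie algebra endomorphism
ψ of 𝔤, and δ := ψ - id, one has for every n ≥ 0 and all x, y ∈ 𝔤:
δ^n ⁅x,y⁆ = ∑_{0 ≤ i,j ≤ n} a^n_{i,j} • ⁅δ^i x, δ^j y⁆, where a^n_{i,j} is the
coefficient of X^i Y^j in (X + Y + XY)^n ∈ ℕ[X,Y].
-/

open MvPolynomial in
/-- `trinom n i j` is the coefficient of `X^i Y^j` in `(X + Y + X*Y)^n ∈ ℕ[X,Y]`. -/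
noncomputable def trinom (n i j : ℕ) : ℕ :=
  MvPolynomial.coeff (Finsupp.single 0 i + Finsupp.single 1 j)
    (((X 0 + X 1 + X 0 * X 1 : MvPolynomial (Fin 2) ℕ)) ^ n)

open MvPolynomial

/-- The `ℕ`-linear map `ℕ[X, Y] → L` sending the monomial `X ^ i * Y ^ j` to
`⁅d ^ i x, d ^ j y⁆`. -/
noncomputable def bracketEval {R L : Type*} [CommRing R] [LieRing L] [LieAlgebra R L]
    (d : Module.End R L) (x y : L) : MvPolynomial (Fin 2) ℕ →ₗ[ℕ] L :=
  (basisMonomials (Fin 2) ℕ).constr ℕ fun m => ⁅(d ^ m 0) x, (d ^ m 1) y⁆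

lemma bracketEval_monomial {R L : Type*} [CommRing R] [LieRing L] [LieAlgebra R L]
    (d : Module.End R L) (x y : L) (m : Fin 2 →₀ ℕ) (c : ℕ) :
    bracketEval d x y (monomial m c) = c • ⁅(d ^ m 0) x, (d ^ m 1) y⁆ := by
  have h : (monomial m c : MvPolynomial (Fin 2) ℕ) = c • basisMonomials (Fin 2) ℕ m := by
    simp [smul_monomial]
  rw [h, map_smul, bracketEval, Module.Basis.constr_basis]

lemma bracketEval_mul {R L : Type*} [CommRing R] [LieRing L] [LieAlgebra R L]
    (d : Module.End R L) (hd : ∀ u v : L, d ⁅u, v⁆ = ⁅d u, v⁆ + ⁅u, d v⁆ + ⁅d u, d v⁆)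
    (x y : L) (p : MvPolynomial (Fin 2) ℕ) :
    bracketEval d x y ((X 0 + X 1 + X 0 * X 1) * p) = d (bracketEval d x y p) := by
  induction p using MvPolynomial.induction_on' with
  | add p q hp hq => rw [mul_add, map_add, hp, hq, map_add, map_add]
  | monomial m c =>
    simp only [X, add_mul, monomial_mul, map_add, bracketEval_monomial, map_nsmul, hd]
    simp [pow_add, smul_add]

lemma bracketEval_pow {R L : Type*} [CommRing R] [LieRing L] [LieAlgebra R L]
    (d : Module.End R L) (hd : ∀ u v : L, d ⁅u, v⁆ = ⁅d u, v⁆ + ⁅u, d v⁆ + ⁅d u, d v⁆)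
    (x y : L) (n : ℕ) :
    bracketEval d x y ((X 0 + X 1 + X 0 * X 1) ^ n) = (d ^ n) ⁅x, y⁆ := by
  induction n with
  | zero =>
    have h := bracketEval_monomial d x y 0 1
    simpa using h
  | succ n ih => rw [pow_succ', bracketEval_mul d hd, ih, pow_succ', Module.End.mul_apply]

lemma degreeOf_trinomial_pow_le (k : Fin 2) (n : ℕ) :
    degreeOf k ((X 0 + X 1 + X 0 * X 1 : MvPolynomial (Fin 2) ℕ) ^ n) ≤ n := by
  have h : degreeOf k (X 0 + X 1 + X 0 * X 1 : MvPolynomial (Fin 2) ℕ) ≤ 1 := by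
    refine (degreeOf_add_le _ _ _).trans (max_le ((degreeOf_add_le _ _ _).trans ?_)
      ((degreeOf_mul_le _ _ _).trans ?_)) <;> fin_cases k <;> simp [degreeOf_X]
  calc _ ≤ n * _ := degreeOf_pow_le _ _ _
    _ ≤ n * 1 := Nat.mul_le_mul_left n h
    _ = n := mul_one n

/-- Monomial expansion of a polynomial in two variables of degree at most `n` in each. -/
lemma eq_sum_monomial_of_degreeOf_le (p : MvPolynomial (Fin 2) ℕ) (n : ℕ)
    (hp : ∀ k, degreeOf k p ≤ n) :
    p = ∑ i ∈ Finset.range (n + 1), ∑ j ∈ Finset.range (n + 1),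
      monomial (Finsupp.single 0 i + Finsupp.single 1 j)
        (coeff (Finsupp.single 0 i + Finsupp.single 1 j) p) := by
  have hm (m : Fin 2 →₀ ℕ) : Finsupp.single 0 (m 0) + Finsupp.single 1 (m 1) = m := by
    ext k; fin_cases k <;> simp
  rw [← Finset.sum_product']
  conv_lhs => rw [← support_sum_monomial_coeff p]
  refine Finset.sum_of_injOn (fun m => (m 0, m 1)) ?_ ?_ ?_ ?_
  · intro m _ m' _ h
    simp only [Prod.mk.injEq] at h
    rw [← hm m, ← hm m', h.1, h.2]
  · intro m hmp
    have h (k : Fin 2) := (monomial_le_degreeOf k hmp).trans (hp k)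
    simpa [Nat.lt_succ_iff] using And.intro (h 0) (h 1)
  · rintro ⟨i, j⟩ _ hij
    rw [monomial_eq_zero]
    by_contra hc
    exact hij ⟨_, mem_support_iff.2 hc, by simp⟩
  · intro m _
    simp only [hm]

theorem pow_of_unipotent_difference_on_bracket
    (R : Type*) [CommRing R] (𝔤 : Type*) [LieRing 𝔤] [LieAlgebra R 𝔤]
    (ψ : 𝔤 →ₗ⁅R⁆ 𝔤) :
    ∀ (n : ℕ) (x y : 𝔤),
      (((ψ.toLinearMap - LinearMap.id : Module.End R 𝔤)) ^ n) ⁅x, y⁆ =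
        ∑ i ∈ Finset.range (n + 1), ∑ j ∈ Finset.range (n + 1),
          trinom n i j •
            ⁅(((ψ.toLinearMap - LinearMap.id : Module.End R 𝔤)) ^ i) x,
              (((ψ.toLinearMap - LinearMap.id : Module.End R 𝔤)) ^ j) y⁆ := by
  intro n x y
  have hd (u v : 𝔤) : (ψ.toLinearMap - LinearMap.id : Module.End R 𝔤) ⁅u, v⁆ =
      ⁅(ψ.toLinearMap - LinearMap.id : Module.End R 𝔤) u, v⁆ +
        ⁅u, (ψ.toLinearMap - LinearMap.id : Module.End R 𝔤) v⁆ +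
        ⁅(ψ.toLinearMap - LinearMap.id : Module.End R 𝔤) u,
          (ψ.toLinearMap - LinearMap.id : Module.End R 𝔤) v⁆ := by
    simp only [LinearMap.sub_apply, LinearMap.id_apply, LieHom.coe_toLinearMap, LieHom.map_lie,
      sub_lie, lie_sub]
    abel
  rw [← bracketEval_pow _ hd, eq_sum_monomial_of_degreeOf_le _ n
    fun k => degreeOf_trinomial_pow_le k n]
  simp only [map_sum, bracketEval_monomial]
  simp [trinom]
end

section
/- Let H be a finite-dimensional ℚ-vector space, let k ≥ 1, let 𝔫 := N_{2k}(H) be the free nilpotent Lie algebra of class 2k on H, and let ι : H → 𝔫 be the canonical map. Let G_k be the set of Lie algebra automorphisms φ of 𝔫 such that φ(x) − x ∈ Γ_{k+1}𝔫 for all x ∈ 𝔫. Then G_k is a group under composition, and the map T : G_k → Hom_ℚ(H, Γ_{k+1}𝔫) defined by T(φ)(h) := φ(ι(h)) − ι(h) is an injective group homomorphism into the additive group Hom_ℚ(H, Γ_{k+1}𝔫): namely T(φ ∘ φ') = T(φ) + T(φ') for all φ, φ' ∈ G_k, and T(φ) = 0 implies φ = id. -/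
/-!
The proof rests on two facts.

* If an automorphism `φ` moves every element by something in `Γ_{k+1}𝔫`, then it moves elements of
  `Γ_{j+1}𝔫` by something in `Γ_{k+j+1}𝔫` (`map_sub_mem_lcs_add`); this follows by induction on `j`
  from `⁅Γ_i, Γ_j⁆ ⊆ Γ_{i+j}`. Applied to `φ' x - x ∈ Γ_{k+1}𝔫`, it says that `φ` fixes
  `φ' x - x`, because `Γ_{2k+1}𝔫 = 0`; this is additivity of `T`.
* `𝔫 = ι(H) + ⁅𝔫, 𝔫⁆` (`range_sup_lcs_one_eq_top`): otherwise a nonzero linear functional would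
  vanish on the right-hand side, and together with `0` it would violate uniqueness of extensions to
  the abelian Lie algebra `ℚ`. Only this one test algebra is used, so it does not matter that the
  universal property is restricted to Lie algebras in the lowest universe.

If `φ` fixes `ι(H)` pointwise, the two facts show that `φ x - x ∈ Γ_{j+1}𝔫` for all `x` implies
`φ x - x ∈ Γ_{j+2}𝔫` for all `x`; induction on `j` and nilpotency give `φ = id`.
-/


/-!
Statement 6. Let H be a finite-dimensional ℚ-vector space, k ≥ 1, and let 𝔫 be the free
nilpotent Lie algebra of class 2k on H, with canonical map ι : H → 𝔫.  (Here 𝔫 is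
axiomatized by its defining properties: it is nilpotent of class ≤ 2k, i.e.
Γ_{2k+1}𝔫 = 0, and it satisfies the universal property of the free nilpotent Lie algebra
of class 2k on H.)  Let G_k be the set of Lie algebra automorphisms φ of 𝔫 with
φ(x) − x ∈ Γ_{k+1}𝔫 for all x.  Then G_k is a group under composition, and
T : G_k → Hom(H, Γ_{k+1}𝔫), T(φ)(h) := φ(ι h) − ι h, is an injective homomorphism into
the additive group Hom_ℚ(H, Γ_{k+1}𝔫).

`LieModule.lowerCentralSeries ℚ 𝔫 𝔫 j` is Γ_{j+1}𝔫 (Mathlib's indexing).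
-/

/-- The set `G_k` of automorphisms of `𝔫` congruent to the identity modulo `Γ_{k+1}𝔫`. -/
def johnsonAutSet (k : ℕ) (𝔫 : Type*) [LieRing 𝔫] [LieAlgebra ℚ 𝔫] :
    Set (𝔫 ≃ₗ⁅ℚ⁆ 𝔫) :=
  {φ | ∀ x, φ x - x ∈ LieModule.lowerCentralSeries ℚ 𝔫 𝔫 k}

/-- In the usual indexing, `⁅Γ_{i+1}, Γ_{j+1}⁆ ⊆ Γ_{i+j+2}`. -/
theorem lie_mem_lcs_add {L : Type*} [LieRing L] [LieAlgebra ℚ L] (i : ℕ) :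
    ∀ (j : ℕ) (x y : L), x ∈ LieModule.lowerCentralSeries ℚ L L i →
      y ∈ LieModule.lowerCentralSeries ℚ L L j →
      ⁅x, y⁆ ∈ LieModule.lowerCentralSeries ℚ L L (i + j + 1) := by
  induction i with
  | zero =>
    intro j x y _ hy
    rw [zero_add, LieModule.lowerCentralSeries_succ]
    exact LieSubmodule.lie_mem_lie (LieSubmodule.mem_top x) hy
  | succ i ih =>
    intro j x y hx hy
    rw [LieModule.lowerCentralSeries_succ, ← LieSubmodule.mem_toSubmodule,
      LieSubmodule.lieIdeal_oper_eq_linear_span'] at hx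
    induction hx using Submodule.span_induction with
    | mem x hx =>
      obtain ⟨a, -, b, hb, rfl⟩ := hx
      rw [lie_lie]
      refine sub_mem ?_ ?_
      · have h := ih j b y hb hy
        rw [show i + 1 + j + 1 = (i + j + 1) + 1 by omega, LieModule.lowerCentralSeries_succ]
        exact LieSubmodule.lie_mem_lie (LieSubmodule.mem_top a) h
      · have h : ⁅a, y⁆ ∈ LieModule.lowerCentralSeries ℚ L L (j + 1) := by
          rw [LieModule.lowerCentralSeries_succ]
          exact LieSubmodule.lie_mem_lie (LieSubmodule.mem_top a) hy
        have h' := ih (j + 1) b _ hb h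
        rwa [show i + (j + 1) + 1 = i + 1 + j + 1 by omega] at h'
    | zero => simp
    | add x x' _ _ h h' => rw [add_lie]; exact add_mem h h'
    | smul c x _ h => rw [smul_lie]; exact SMulMemClass.smul_mem c h

/-- An automorphism congruent to the identity modulo `Γ_{k+1}` is congruent to the identity
modulo `Γ_{k+j+1}` on `Γ_{j+1}`. -/
theorem map_sub_mem_lcs_add {L : Type*} [LieRing L] [LieAlgebra ℚ L] {k : ℕ} {φ : L ≃ₗ⁅ℚ⁆ L}
    (hφ : φ ∈ johnsonAutSet k L) (j : ℕ) :
    ∀ x ∈ LieModule.lowerCentralSeries ℚ L L j,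
      φ x - x ∈ LieModule.lowerCentralSeries ℚ L L (k + j) := by
  induction j with
  | zero => exact fun x _ ↦ hφ x
  | succ j ih =>
    intro x hx
    rw [LieModule.lowerCentralSeries_succ, ← LieSubmodule.mem_toSubmodule,
      LieSubmodule.lieIdeal_oper_eq_linear_span'] at hx
    induction hx using Submodule.span_induction with
    | mem x hx =>
      obtain ⟨a, -, b, hb, rfl⟩ := hx
      have hb' := ih b hb
      have hφb : φ b ∈ LieModule.lowerCentralSeries ℚ L L j := by
        have h := add_mem
          (LieModule.antitone_lowerCentralSeries ℚ L L (Nat.le_add_left j k) hb') hb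
        rwa [sub_add_cancel] at h
      have h : φ ⁅a, b⁆ - ⁅a, b⁆ = ⁅φ a - a, φ b⁆ + ⁅a, φ b - b⁆ := by
        rw [LieEquiv.map_lie, sub_lie, lie_sub]; abel
      rw [h]
      refine add_mem (lie_mem_lcs_add k j _ _ (hφ a) hφb) ?_
      rw [← add_assoc, LieModule.lowerCentralSeries_succ]
      exact LieSubmodule.lie_mem_lie (LieSubmodule.mem_top a) hb'
    | zero => simp
    | add x x' _ _ h h' =>
      have := add_mem h h'
      rwa [map_add, add_sub_add_comm]
    | smul c x _ h =>
      rw [map_smul, ← smul_sub]; exact SMulMemClass.smul_mem c h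

/-- `ι(H)` generates the abelianization of `𝔫`, as soon as the extension of the zero map along `ι`
to a homomorphism into a nilpotent Lie algebra of class at most `n`, where `n ≥ 1`, is unique. -/
theorem range_sup_lcs_one_eq_top {H : Type*} [AddCommGroup H] [Module ℚ H] {n : ℕ} (hn : 1 ≤ n)
    {L : Type*} [LieRing L] [LieAlgebra ℚ L] (ι : H →ₗ[ℚ] L)
    (huniq : ∀ (M : Type) [LieRing M] [LieAlgebra ℚ M],
        LieModule.lowerCentralSeries ℚ M M n = ⊥ →
        ∀ F : L →ₗ⁅ℚ⁆ M, (∀ h, F (ι h) = 0) → F = 0) :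
    LinearMap.range ι ⊔ (LieModule.lowerCentralSeries ℚ L L 1).toSubmodule = ⊤ := by
  by_contra hne
  obtain ⟨ℓ, hℓ0, hℓ⟩ := Submodule.exists_le_ker_of_lt_top _ (lt_top_iff_ne_top.mpr hne)
  let _ : LieRing ℚ := LieRing.ofAssociativeRing
  let _ : LieAlgebra ℚ ℚ := LieAlgebra.ofAssociativeAlgebra
  have hbr : ∀ a b : ℚ, ⁅a, b⁆ = 0 := fun a b ↦ by
    rw [LieRing.of_associative_ring_bracket, mul_comm, sub_self]
  have hbot : LieModule.lowerCentralSeries ℚ ℚ ℚ n = ⊥ := by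
    have : LieModule.IsTrivial ℚ ℚ := ⟨hbr⟩
    have h1 : LieModule.lowerCentralSeries ℚ ℚ ℚ 1 = ⊥ :=
      (LieModule.trivial_iff_lower_central_eq_bot ℚ ℚ ℚ).mp inferInstance
    exact le_bot_iff.mp (h1 ▸ LieModule.antitone_lowerCentralSeries ℚ ℚ ℚ hn)
  have hlie : ∀ x y : L, ℓ ⁅x, y⁆ = 0 := fun x y ↦ by
    refine hℓ (Submodule.mem_sup_right ?_)
    rw [LieSubmodule.mem_toSubmodule, LieModule.lowerCentralSeries_succ]
    exact LieSubmodule.lie_mem_lie (LieSubmodule.mem_top x) (by simp)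
  let F : L →ₗ⁅ℚ⁆ ℚ := { ℓ with map_lie' := fun {x y} ↦ (hlie x y).trans (hbr _ _).symm }
  have hF : F = 0 := huniq ℚ hbot F fun h ↦ hℓ (Submodule.mem_sup_left ⟨h, rfl⟩)
  exact hℓ0 (LinearMap.ext fun x ↦ LieHom.congr_fun hF x)

theorem johnson_truncation_is_injective_hom
    (H : Type*) [AddCommGroup H] [Module ℚ H] [FiniteDimensional ℚ H]
    (k : ℕ) (hk : 1 ≤ k)
    (𝔫 : Type*) [LieRing 𝔫] [LieAlgebra ℚ 𝔫] (ι : H →ₗ[ℚ] 𝔫)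
    -- 𝔫 is nilpotent of class ≤ 2k : Γ_{2k+1}𝔫 = 0
    (hnil : LieModule.lowerCentralSeries ℚ 𝔫 𝔫 (2 * k) = ⊥)
    -- universal property of the free nilpotent Lie algebra of class 2k on H
    (hfree : ∀ (𝔪 : Type) [LieRing 𝔪] [LieAlgebra ℚ 𝔪],
        LieModule.lowerCentralSeries ℚ 𝔪 𝔪 (2 * k) = ⊥ →
        ∀ f : H →ₗ[ℚ] 𝔪, ∃! F : 𝔫 →ₗ⁅ℚ⁆ 𝔪, ∀ h, F (ι h) = f h) :
    -- G_k contains the identity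
    LieEquiv.refl ∈ johnsonAutSet k 𝔫 ∧
    -- G_k is closed under composition (φ ∘ φ' = φ'.trans φ)
    (∀ φ ∈ johnsonAutSet k 𝔫, ∀ φ' ∈ johnsonAutSet k 𝔫,
        φ'.trans φ ∈ johnsonAutSet k 𝔫) ∧
    -- G_k is closed under inversion
    (∀ φ ∈ johnsonAutSet k 𝔫, φ.symm ∈ johnsonAutSet k 𝔫) ∧
    -- T(φ) takes values in Γ_{k+1}𝔫, i.e. T(φ) ∈ Hom_ℚ(H, Γ_{k+1}𝔫)
    (∀ φ ∈ johnsonAutSet k 𝔫, ∀ h : H,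
        φ (ι h) - ι h ∈ LieModule.lowerCentralSeries ℚ 𝔫 𝔫 k) ∧
    -- T is a homomorphism: T(φ ∘ φ') = T(φ) + T(φ')
    (∀ φ ∈ johnsonAutSet k 𝔫, ∀ φ' ∈ johnsonAutSet k 𝔫, ∀ h : H,
        (φ'.trans φ) (ι h) - ι h = (φ (ι h) - ι h) + (φ' (ι h) - ι h)) ∧
    -- T is injective: T(φ) = 0 implies φ = id
    (∀ φ ∈ johnsonAutSet k 𝔫, (∀ h : H, φ (ι h) - ι h = 0) → φ = LieEquiv.refl) := by
  have htop : LinearMap.range ι ⊔ (LieModule.lowerCentralSeries ℚ 𝔫 𝔫 1).toSubmodule = ⊤ :=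
    range_sup_lcs_one_eq_top (n := 2 * k) (by omega) ι fun 𝔪 _ _ h𝔪 F hF ↦
      (hfree 𝔪 h𝔪 0).unique hF fun _ ↦ rfl
  refine ⟨fun x ↦ by simp, fun φ hφ φ' hφ' x ↦ ?_, fun φ hφ x ↦ ?_, fun φ hφ h ↦ hφ _,
    fun φ hφ φ' hφ' h ↦ ?_, fun φ hφ h0 ↦ ?_⟩
  · have h := add_mem (hφ (φ' x)) (hφ' x)
    rwa [sub_add_sub_cancel] at h
  · have h := neg_mem (hφ (φ.symm x))
    rwa [LieEquiv.apply_symm_apply, neg_sub] at h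
  · have h1 := map_sub_mem_lcs_add hφ k _ (hφ' (ι h))
    rw [← two_mul, hnil, LieSubmodule.mem_bot, map_sub] at h1
    rw [LieEquiv.trans_apply, ← sub_eq_zero, ← h1]
    abel
  · have key : ∀ j, φ ∈ johnsonAutSet j 𝔫 := by
      intro j
      induction j with
      | zero => exact fun x ↦ by simp
      | succ j ih =>
        intro x
        have hx : x ∈ LinearMap.range ι ⊔ (LieModule.lowerCentralSeries ℚ 𝔫 𝔫 1).toSubmodule :=
          htop ▸ Submodule.mem_top
        obtain ⟨_, ⟨h, rfl⟩, z, hz, rfl⟩ := Submodule.mem_sup.mp hx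
        rw [map_add, add_sub_add_comm, h0, zero_add]
        exact map_sub_mem_lcs_add ih 1 z hz
    ext x
    have h := key (2 * k) x
    rw [hnil, LieSubmodule.mem_bot, sub_eq_zero] at h
    simpa using h
end

section
/- Let A be an associative ℚ-algebra and I ⊆ A a two-sided ideal with I^N = 0 for some N ≥ 1. For x ∈ I, exp(x) := Σ_{n≥0} x^n/n! is a unit of A with inverse exp(−x). Then for every r ≥ 1 and all x_1, …, x_r ∈ I, the iterated group commutator c := [exp(x_1), [exp(x_2), […, exp(x_r)]⋯]] in the unit group of A (where [u,v] := u v u^{-1} v^{-1}) satisfies c − exp(⁅x_1, ⁅x_2, …, x_r⁆⋯⁆) ∈ I^{r+1}, where ⁅x,y⁆ := xy − yx denotes the commutator bracket. -/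
/-!
Modulo `I ^ (r + 1)`, both sides equal `1 + L` with `L = ⁅x₁, ⁅x₂, …, x_r⁆⋯⁆ ∈ I ^ r`.

For the exponential this holds because all terms of degree at least two in `exp L` lie in
`I ^ (2 * r) ≤ I ^ (r + 1)` (`texp_sub_one_sub_mem`). For the group commutator it is an induction
on `r` (`commutator_step`, `commList_congruence`), based on the identity
`u v u⁻¹ v⁻¹ - 1 = ⁅u - 1, v - 1⁆ u⁻¹ v⁻¹`: if `u - 1 ≡ x` modulo `I ^ 2` and `v - 1 ≡ L` modulo
`I ^ (r + 1)`, then `⁅u - 1, v - 1⁆ ≡ ⁅x, L⁆` modulo `I ^ (r + 2)`, and multiplying by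
`u⁻¹ v⁻¹ ∈ 1 + I` does not change this class. That `exp x` is inverse to `exp (-x)` comes from
identifying `texp` with Mathlib's `IsNilpotent.exp`.
-/

/-!
Statement 10. Let A be an associative ℚ-algebra and I a two-sided ideal with I^N = 0.
For x ∈ I, exp(x) := Σ_{n≥0} x^n/n!  (realized by the truncated sum Σ_{n<N}) is a unit
of A with inverse exp(−x).  For every r ≥ 1 and x_1,…,x_r ∈ I, the iterated group
commutator c = [exp(x_1),[exp(x_2),[…,exp(x_r)]⋯]] of the corresponding units satisfies
c − exp(⁅x_1,⁅x_2,…,x_r⁆⋯⁆) ∈ I^{r+1}.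

The two-sided ideal I is encoded as a ℚ-submodule closed under left and right
multiplication by A; its powers are submodule powers.
-/

/-- Truncated exponential `Σ_{n<N} x^n/n!`; the genuine exponential when `x^N = 0`. -/
noncomputable def texp {A : Type*} [Ring A] [Algebra ℚ A] (N : ℕ) (x : A) : A :=
  ∑ n ∈ Finset.range N, ((n.factorial : ℚ)⁻¹) • x ^ n

/-- Right-nested iterated Lie bracket `⁅x₁, ⁅x₂, …, x_r⁆⋯⁆` of a list of ring elements
(with respect to the commutator bracket `⁅x,y⁆ = xy − yx`). -/
def lieList {A : Type*} [Ring A] : List A → A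
  | [] => 0
  | [x] => x
  | x :: y :: ys => ⁅x, lieList (y :: ys)⁆

/-- Right-nested iterated group commutator `[u₁, [u₂, …, u_r]⋯]` of a list of group
elements, where `[u,v] = u v u⁻¹ v⁻¹`. -/
def commList {G : Type*} [Group G] : List G → G
  | [] => 1
  | [u] => u
  | u :: v :: vs => u * commList (v :: vs) * u⁻¹ * (commList (v :: vs))⁻¹

section Helpers

variable {A : Type*} [Ring A] [Algebra ℚ A] {I : Submodule ℚ A}

theorem ideal_pow_antitone (hIl : ∀ (x : A), ∀ a ∈ I, x * a ∈ I) {m n : ℕ} (hm : 1 ≤ m)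
    (hmn : m ≤ n) : I ^ n ≤ I ^ m := by
  induction n, hmn using Nat.le_induction with
  | base => exact le_rfl
  | succ n hn ih =>
    refine le_trans ?_ ih
    obtain ⟨k, rfl⟩ : ∃ k, n = k + 1 := ⟨n - 1, by omega⟩
    rw [pow_succ I (k + 1), pow_succ I k, mul_assoc]
    exact mul_le_mul_right (Submodule.mul_le.2 fun a _ b hb => hIl a b hb) _

theorem mul_mem_pow {a b : A} {m n k : ℕ} (ha : a ∈ I ^ m) (hb : b ∈ I ^ n) (hk : m + n = k) :
    a * b ∈ I ^ k := by
  rw [← hk, pow_add]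
  exact Submodule.mul_mem_mul ha hb

theorem ideal_pow_eq_zero {N : ℕ} (hI : I ^ N = ⊥) {x : A} (hx : x ∈ I) : x ^ N = 0 := by
  have h := Submodule.pow_mem_pow I hx N
  rwa [hI, Submodule.mem_bot] at h

theorem texp_eq_exp {N : ℕ} {x : A} (h : x ^ N = 0) : texp N x = IsNilpotent.exp x :=
  (IsNilpotent.exp_eq_sum h).symm

/-- For `y ∈ I ^ r`, every term of degree at least two in `exp y` lies in `I ^ (2 * r)`. -/
theorem texp_sub_one_sub_mem (hIl : ∀ (x : A), ∀ a ∈ I, x * a ∈ I) {N : ℕ} (hI : I ^ N = ⊥)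
    {r : ℕ} (hr : 1 ≤ r) {y : A} (hy : y ∈ I ^ r) : texp N y - 1 - y ∈ I ^ (r + 1) := by
  have hyI : y ∈ I := by simpa using ideal_pow_antitone hIl le_rfl hr hy
  have hyN := ideal_pow_eq_zero hI hyI
  -- Lengthening the truncation makes the terms of degree 0 and 1 available even when `N = 1`.
  have e : texp N y = texp (N + 2) y := by
    rw [texp_eq_exp hyN, texp_eq_exp (by rw [pow_add, hyN, zero_mul])]
  have e' : texp N y - 1 - y
      = ∑ n ∈ Finset.range N, (((n + 2).factorial : ℚ)⁻¹) • y ^ (n + 2) := by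
    rw [e, texp, Finset.sum_range_succ', Finset.sum_range_succ']
    simp
  rw [e']
  refine Submodule.sum_mem _ fun n _ => Submodule.smul_mem _ _ ?_
  have h : y ^ (n + 2) ∈ I ^ (r * (n + 2)) := by
    rw [pow_mul]
    exact Submodule.pow_mem_pow _ hy _
  exact ideal_pow_antitone hIl (by omega) (by nlinarith) h

theorem inv_sub_one_mem (hIl : ∀ (x : A), ∀ a ∈ I, x * a ∈ I) {u : Aˣ} (hu : (u : A) - 1 ∈ I) :
    ((u⁻¹ : Aˣ) : A) - 1 ∈ I := by
  have h : ((u⁻¹ : Aˣ) : A) - 1 = -(((u⁻¹ : Aˣ) : A) * ((u : A) - 1)) := by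
    rw [mul_sub, Units.inv_mul]
    simp
  rw [h]
  exact I.neg_mem (hIl _ _ hu)

/-- One commutator step: leading terms of `u - 1` and `v - 1` in degrees `1` and `r` give the
leading term of the group commutator in degree `r + 1`, namely their Lie bracket. -/
theorem commutator_step (hIl : ∀ (x : A), ∀ a ∈ I, x * a ∈ I) {r : ℕ} (hr : 1 ≤ r) {u v : Aˣ}
    {x L : A} (hx : x ∈ I) (hL : L ∈ I ^ r) (hu : (u : A) - 1 - x ∈ I ^ 2)
    (hv : (v : A) - 1 - L ∈ I ^ (r + 1)) :
    ((u * v * u⁻¹ * v⁻¹ : Aˣ) : A) - 1 - ⁅x, L⁆ ∈ I ^ (r + 1 + 1) := by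
  have hx1 : x ∈ I ^ 1 := by simpa using hx
  obtain ⟨f, hf⟩ : ∃ f, f = (u : A) - 1 - x := ⟨_, rfl⟩
  obtain ⟨e, he⟩ : ∃ e, e = (v : A) - 1 - L := ⟨_, rfl⟩
  rw [← hf] at hu
  rw [← he] at hv
  have hu1 : (u : A) - 1 ∈ I := by
    have h : (u : A) - 1 = x + f := by rw [hf]; abel
    rw [h]
    exact I.add_mem hx (by simpa using ideal_pow_antitone hIl le_rfl one_le_two hu)
  have hv1 : (v : A) - 1 ∈ I ^ r := by
    have h : (v : A) - 1 = L + e := by rw [he]; abel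
    rw [h]
    exact Submodule.add_mem _ hL (ideal_pow_antitone hIl hr (Nat.le_succ r) hv)
  have hv1' : (v : A) - 1 ∈ I := by simpa using ideal_pow_antitone hIl le_rfl hr hv1
  have hw : ((u⁻¹ : Aˣ) : A) * ((v⁻¹ : Aˣ) : A) - 1 ∈ I ^ 1 := by
    have h : ((u⁻¹ : Aˣ) : A) * ((v⁻¹ : Aˣ) : A) - 1
        = ((u⁻¹ : Aˣ) : A) * (((v⁻¹ : Aˣ) : A) - 1) + (((u⁻¹ : Aˣ) : A) - 1) := by noncomm_ring
    rw [h, pow_one]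
    exact I.add_mem (hIl _ _ (inv_sub_one_mem hIl hv1')) (inv_sub_one_mem hIl hu1)
  have hb : ((u : A) - 1) * ((v : A) - 1) - ((v : A) - 1) * ((u : A) - 1) ∈ I ^ (r + 1) := by
    have hu1' : (u : A) - 1 ∈ I ^ 1 := by simpa using hu1
    exact Submodule.sub_mem _ (mul_mem_pow hu1' hv1 (by omega)) (mul_mem_pow hv1 hu1' rfl)
  have hcv : (u : A) * v * ((u⁻¹ : Aˣ) : A) * ((v⁻¹ : Aˣ) : A) - 1
      = ((u : A) * v - v * u) * (((u⁻¹ : Aˣ) : A) * ((v⁻¹ : Aˣ) : A)) := by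
    have h : (v : A) * u * (((u⁻¹ : Aˣ) : A) * ((v⁻¹ : Aˣ) : A)) = 1 := by
      rw [mul_assoc, ← mul_assoc (u : A), Units.mul_inv, one_mul, Units.mul_inv]
    rw [sub_mul, h, ← mul_assoc]
  have hdecomp : (u : A) * v - v * u - ⁅x, L⁆
      = x * e + f * ((v : A) - 1) - (e * x + ((v : A) - 1) * f) := by
    rw [hf, he, Ring.lie_def]
    noncomm_ring
  have hmain : (u : A) * v - v * u - ⁅x, L⁆ ∈ I ^ (r + 1 + 1) := by
    rw [hdecomp]
    exact Submodule.sub_mem _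
      (Submodule.add_mem _ (mul_mem_pow hx1 hv (by omega)) (mul_mem_pow hu hv1 (by omega)))
      (Submodule.add_mem _ (mul_mem_pow hv hx1 (by omega)) (mul_mem_pow hv1 hu (by omega)))
  have hfin : ((u * v * u⁻¹ * v⁻¹ : Aˣ) : A) - 1 - ⁅x, L⁆
      = (((u : A) - 1) * ((v : A) - 1) - ((v : A) - 1) * ((u : A) - 1))
          * (((u⁻¹ : Aˣ) : A) * ((v⁻¹ : Aˣ) : A) - 1)
        + ((u : A) * v - v * u - ⁅x, L⁆) := by
    have h : ((u : A) - 1) * ((v : A) - 1) - ((v : A) - 1) * ((u : A) - 1)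
        = (u : A) * v - v * u := by noncomm_ring
    rw [Units.val_mul, Units.val_mul, Units.val_mul, hcv, h]
    noncomm_ring
  rw [hfin]
  exact Submodule.add_mem _ (mul_mem_pow hb hw rfl) hmain

/-- The leading term of the iterated group commutator of exponentials is the iterated Lie bracket
of their logarithms. -/
theorem commList_congruence (hIl : ∀ (x : A), ∀ a ∈ I, x * a ∈ I) {N : ℕ} (hI : I ^ N = ⊥)
    (r : ℕ) : ∀ (x : Fin (r + 1) → A), (∀ i, x i ∈ I) → ∀ u : Fin (r + 1) → Aˣ,
      (∀ i, (u i : A) = texp N (x i)) →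
      lieList (List.ofFn x) ∈ I ^ (r + 1) ∧
        ((commList (List.ofFn u) : Aˣ) : A) - 1 - lieList (List.ofFn x) ∈ I ^ (r + 1 + 1) := by
  induction r with
  | zero =>
    intro x hx u hu
    have h0 : x 0 ∈ I ^ 1 := by simpa using hx 0
    have h := texp_sub_one_sub_mem hIl hI le_rfl h0
    rw [← hu 0] at h
    simpa [lieList, commList] using And.intro h0 h
  | succ r ih =>
    intro x hx u hu
    obtain ⟨hL, hc⟩ := ih (fun i => x i.succ) (fun i => hx _) (fun i => u i.succ) (fun i => hu _)
    have h0 : x 0 ∈ I ^ 1 := by simpa using hx 0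
    have hu0 := texp_sub_one_sub_mem hIl hI le_rfl h0
    rw [← hu 0] at hu0
    have elie : lieList (List.ofFn x) = ⁅x 0, lieList (List.ofFn fun i => x i.succ)⁆ := by
      simp only [List.ofFn_succ, lieList]
    have ecomm : commList (List.ofFn u) = u 0 * commList (List.ofFn fun i => u i.succ) * (u 0)⁻¹
        * (commList (List.ofFn fun i => u i.succ))⁻¹ := by
      simp only [List.ofFn_succ, commList]
    rw [elie, ecomm]
    refine ⟨?_, commutator_step hIl (by omega) (hx 0) hL hu0 hc⟩
    rw [Ring.lie_def]
    exact Submodule.sub_mem _ (mul_mem_pow h0 hL (by omega)) (mul_mem_pow hL h0 rfl)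

end Helpers

theorem iterated_commutator_of_exponentials
    (A : Type*) [Ring A] [Algebra ℚ A]
    (I : Submodule ℚ A)
    (hIl : ∀ (x : A), ∀ a ∈ I, x * a ∈ I)
    (hIr : ∀ (x : A), ∀ a ∈ I, a * x ∈ I)
    (N : ℕ) (hN : 1 ≤ N) (hI : I ^ N = ⊥) :
    -- exp(x) is a unit with inverse exp(−x), for x ∈ I
    (∀ x ∈ I, texp N x * texp N (-x) = 1 ∧ texp N (-x) * texp N x = 1) ∧
    -- the iterated commutator congruence
    (∀ (r : ℕ), 1 ≤ r → ∀ x : Fin r → A, (∀ i, x i ∈ I) →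
      ∀ u : Fin r → Aˣ, (∀ i, (u i : A) = texp N (x i)) →
        ((commList (List.ofFn u) : Aˣ) : A) - texp N (lieList (List.ofFn x))
          ∈ I ^ (r + 1)) := by
  refine ⟨fun x hx => ?_, fun r hr x hx u hu => ?_⟩
  · have h := ideal_pow_eq_zero hI hx
    have h' := ideal_pow_eq_zero hI (I.neg_mem hx)
    rw [texp_eq_exp h, texp_eq_exp h']
    exact ⟨IsNilpotent.exp_mul_exp_neg_self ⟨N, h⟩, IsNilpotent.exp_neg_mul_exp_self ⟨N, h⟩⟩
  · obtain ⟨r, rfl⟩ : ∃ k, r = k + 1 := ⟨r - 1, by omega⟩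
    obtain ⟨hL, hc⟩ := commList_congruence hIl hI r x hx u hu
    have h := Submodule.sub_mem _ hc (texp_sub_one_sub_mem hIl hI hr hL)
    rwa [sub_sub_sub_cancel_right, sub_sub_sub_cancel_right] at h
end
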